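/- (Proposition 3.1, 17-point case: fourth-order accuracy of the numerical wavenumber.) Fix k > 0, θ ∈ ℝ, γ > 0, b₁ ∈ ℝ with b₂ = 1 − b₁, and d₁, d₂, d₃ with d₁ + d₂ + d₃ = 1. Let e(x, z) = exp(−i·k·(x·cos θ + z·sin θ)). Let L̃ = L̃ₓ + L̃_z be the point-weighting 17-point Laplacian stencil with coefficient functions A ≡ 1 and B ≡ 1 (defined as in the optimal point-weighting 17-point scheme, with spacings h in x and γh in z and weights b₁, b₂), and let Ĩ = d₁I⁽¹⁾ + d₂I⁽²⁾ + d₃I⁽³⁾ be the weighted mass-lumping operator. For h > 0 with (Ĩe)(0, 0; h) ≠ 0, define the squared numerical wavenumber k̃_N(h)² := −(L̃e)(0, 0; h) / (Ĩe)(0, 0; h). Then there exists δ > 0 such that (Ĩe)(0, 0; h) ≠ 0 for all 0 < h < δ, and k̃_N(h)² = k² + O(h⁴) as h → 0⁺; that is, the numerical wavenumber of the optimal point-weighting 17-point scheme approximates the exact wavenumber with fourth-order accuracy. -/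

import Mathlib

noncomputable section

/-- Point-weighted value `û` at `(xo, z)` relative to the center column `xc`,
with vertical half-width `s`. -/
def hatVal (b₁ : ℝ) (u : ℝ × ℝ → ℂ) (xo xc z s : ℝ) : ℂ :=
  (b₁ : ℂ) * u (xo, z) + (((1 : ℂ) - (b₁ : ℂ)) / 2) *
    (u (xo, z + s) + u (xo, z - s) - u (xc, z - s) - u (xc, z + s))

/-- Point-weighted value `p̃` at `(x, zo)` relative to the center row `zc`,
with horizontal half-width `s`. -/
def tildeVal (b₁ : ℝ) (u : ℝ × ℝ → ℂ) (x zo zc s : ℝ) : ℂ :=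
  (b₁ : ℂ) * u (x, zo) + (((1 : ℂ) - (b₁ : ℂ)) / 2) *
    (u (x + s, zo) + u (x - s, zo) - u (x - s, zc) - u (x + s, zc))

/-- The fourth-order flux-form stencil applied to values `vm2, …, vp2`
with coefficient values `Am32, Am12, Ap12, Ap32` and step `h`. -/
def fluxStencil (Am32 Am12 Ap12 Ap32 vm2 vm1 v0 vp1 vp2 : ℂ) (h : ℝ) : ℂ :=
  (1 / (h : ℂ) ^ 2) *
    ( -(9 / 8) * Am12 * ((1 / 24) * vm2 - (9 / 8) * vm1 + (9 / 8) * v0 - (1 / 24) * vp1)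
      + (1 / 24) * Am32 * (-(11 / 12) * vm2 + (17 / 24) * vm1 + (3 / 8) * v0
          - (5 / 24) * vp1 + (1 / 24) * vp2)
      - (1 / 24) * Ap32 * (-(1 / 24) * vm2 + (5 / 24) * vm1 - (3 / 8) * v0
          - (17 / 24) * vp1 + (11 / 12) * vp2)
      + (9 / 8) * Ap12 * ((1 / 24) * vm1 - (9 / 8) * v0 + (9 / 8) * vp1 - (1 / 24) * vp2) )

/-- The x-part `L̃ₓ` of the point-weighting 17-point Laplacian stencil with A ≡ 1. -/
def LxTildeOne (b₁ γ : ℝ) (u : ℝ × ℝ → ℂ) (x z h : ℝ) : ℂ :=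
  fluxStencil 1 1 1 1
    (hatVal b₁ u (x - 2 * h) x z (2 * γ * h)) (hatVal b₁ u (x - h) x z (γ * h))
    ((b₁ : ℂ) * u (x, z))
    (hatVal b₁ u (x + h) x z (γ * h)) (hatVal b₁ u (x + 2 * h) x z (2 * γ * h)) h

/-- The z-part `L̃_z` of the point-weighting 17-point Laplacian stencil with B ≡ 1. -/
def LzTildeOne (b₁ γ : ℝ) (u : ℝ × ℝ → ℂ) (x z h : ℝ) : ℂ :=
  fluxStencil 1 1 1 1
    (tildeVal b₁ u x (z - 2 * γ * h) z (2 * h)) (tildeVal b₁ u x (z - γ * h) z h)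
    ((b₁ : ℂ) * u (x, z))
    (tildeVal b₁ u x (z + γ * h) z h) (tildeVal b₁ u x (z + 2 * γ * h) z (2 * h)) (γ * h)

/-- The orthogonal-neighbor mass-lumping operator `I⁽²⁾`. -/
def I2 (γ : ℝ) (Q : ℝ × ℝ → ℂ) (x z h : ℝ) : ℂ :=
  (1 / 3) * (Q (x - h, z) + Q (x + h, z) + Q (x, z - γ * h) + Q (x, z + γ * h))
    - (1 / 12) * (Q (x - 2 * h, z) + Q (x + 2 * h, z)
        + Q (x, z - 2 * γ * h) + Q (x, z + 2 * γ * h))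

/-- The diagonal-neighbor mass-lumping operator `I⁽³⁾`. -/
def I3 (γ : ℝ) (Q : ℝ × ℝ → ℂ) (x z h : ℝ) : ℂ :=
  (1 / 3) * (Q (x - h, z - γ * h) + Q (x + h, z + γ * h)
      + Q (x - h, z + γ * h) + Q (x + h, z - γ * h))
    - (1 / 12) * (Q (x - 2 * h, z - 2 * γ * h) + Q (x + 2 * h, z + 2 * γ * h)
        + Q (x - 2 * h, z + 2 * γ * h) + Q (x + 2 * h, z - 2 * γ * h))

/-- The weighted mass-lumping operator `Ĩ` of the point-weighting 17-point scheme. -/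
def Itilde (γ d₁ d₂ d₃ : ℝ) (Q : ℝ × ℝ → ℂ) (x z h : ℝ) : ℂ :=
  (d₁ : ℂ) * Q (x, z) + (d₂ : ℂ) * I2 γ Q x z h + (d₃ : ℂ) * I3 γ Q x z h

/-- The plane wave e(x, z) = exp(−i·k·(x·cos θ + z·sin θ)). -/
def planeWave (k θ : ℝ) (p : ℝ × ℝ) : ℂ :=
  Complex.exp (-Complex.I * (k : ℂ) * ((p.1 : ℂ) * (Real.cos θ : ℂ) + (p.2 : ℂ) * (Real.sin θ : ℂ)))

/-!
On an exponential `exp (α x + β z)` the symmetric stencils reduce to even functions of the step,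
sampled at `h` and `2 h` and combined with Richardson weights: `h² L̃ₓ` is `(16 F(h) - F(2 h)) / 6`
with `F(h) = (cosh (α h) - 1) (1 + b₂ (cosh (γ β h) - 1)) = α² h² / 2 + c₄ h⁴ + O(h⁶)`, and the mass
operator is `(4 G(h) - G(2 h)) / 3` with `G(h) = 1 + c₂ h² + O(h⁴)`. The weights cancel `c₄` and
`c₂`, so `L̃ₓ → α²` and `Ĩ → 1` with errors `O(h⁴)`. Exchanging the coordinates turns `L̃_z` into an
`L̃ₓ` with step `γ h` and aspect ratio `γ⁻¹`.
-/

section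

open Filter Asymptotics Topology

section RichardsonExtrapolation

variable {E : Type*} [NormedAddCommGroup E]

lemma isBigO_pow_comp_const_mul {l : Filter ℝ} {f : ℝ → E} {n : ℕ} {c : ℝ}
    (hf : f =O[l] fun h : ℝ ↦ h ^ n) (hc : Tendsto (c * ·) l l) :
    (fun h ↦ f (c * h)) =O[l] fun h : ℝ ↦ h ^ n := by
  refine (hf.comp_tendsto hc).trans ?_
  simpa only [Function.comp_def, mul_pow] using isBigO_const_mul_self (c ^ n) (fun h : ℝ ↦ h ^ n) l

lemma tendsto_const_mul_nhds_zero (c : ℝ) : Tendsto (c * ·) (𝓝 0) (𝓝 (0 : ℝ)) := by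
  simpa only [mul_zero] using (continuous_const_mul c).tendsto 0

lemma richardson_isBigO [NormedSpace ℝ E] {f : ℝ → E} {a b : E} {m n r : ℕ} (c : ℝ)
    (hf : (fun h : ℝ ↦ f h - (h ^ m • a + h ^ n • b)) =O[𝓝 0] fun h : ℝ ↦ h ^ r) :
    (fun h : ℝ ↦ c ^ n • f h - f (c * h) - ((c ^ n - c ^ m) * h ^ m) • a)
      =O[𝓝 0] fun h : ℝ ↦ h ^ r := by
  have hfc := isBigO_pow_comp_const_mul hf (tendsto_const_mul_nhds_zero c)
  refine ((hf.const_smul_left (c ^ n)).sub hfc).congr_left fun h ↦ ?_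
  simp only [Pi.smul_apply]
  module

end RichardsonExtrapolation

lemma div_sub_isBigO {ι 𝕜 : Type*} [NormedField 𝕜] {l : Filter ι} {f m : ι → 𝕜} {g : ι → ℝ}
    {a : 𝕜} (hf : (fun i ↦ f i - a) =O[l] g) (hm : (fun i ↦ m i - 1) =O[l] g)
    (hm1 : Tendsto m l (𝓝 1)) :
    (fun i ↦ f i / m i - a) =O[l] g := by
  have hinv : (fun i ↦ (m i)⁻¹) =O[l] fun _ ↦ (1 : ℝ) := (hm1.inv₀ one_ne_zero).isBigO_one ℝ
  refine ((hf.sub (hm.const_mul_left a)).mul hinv).congr' ?_ (by simp)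
  filter_upwards [hm1.eventually_ne one_ne_zero] with i hi
  field_simp
  ring

lemma exists_pos_forall_of_eventually_of_isBigO {E : Type*} [NormedAddCommGroup E]
    {P : ℝ → Prop} {f : ℝ → E} {g : ℝ → ℝ}
    (hP : ∀ᶠ h in 𝓝[>] 0, P h) (hf : f =O[𝓝[>] 0] g) :
    ∃ M δ : ℝ, 0 < M ∧ 0 < δ ∧ ∀ h : ℝ, 0 < h → h < δ → P h ∧ ‖f h‖ ≤ M * ‖g h‖ := by
  obtain ⟨M, hM, hfM⟩ := hf.exists_pos
  obtain ⟨δ, hδ, hall⟩ := mem_nhdsGT_iff_exists_Ioo_subset.1 (hP.and hfM.bound)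
  exact ⟨M, δ, hM, hδ, fun h h0 hhδ ↦ hall ⟨h0, hhδ⟩⟩

section CoshExpansion

lemma sum_range_two_mul_pow_add_neg_pow {R : Type*} [CommRing R] (w : R) (c : ℕ → R) (n : ℕ) :
    ∑ i ∈ Finset.range (2 * n), w ^ i * c i + ∑ i ∈ Finset.range (2 * n), (-w) ^ i * c i =
      2 * ∑ i ∈ Finset.range n, w ^ (2 * i) * c (2 * i) := by
  induction n with
  | zero => simp
  | succ n ih =>
    have heven : (-w) ^ (2 * n) = w ^ (2 * n) := (even_two_mul n).neg_pow w
    have hodd : (-w) ^ (2 * n + 1) = -w ^ (2 * n + 1) := (odd_two_mul_add_one n).neg_pow w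
    simp only [mul_add_one, Finset.sum_range_succ, heven, hodd]
    linear_combination ih

lemma cosh_sub_sum_range_isBigO_pow (n : ℕ) :
    (fun w : ℂ ↦ Complex.cosh w - ∑ i ∈ Finset.range n, w ^ (2 * i) / ((2 * i).factorial : ℂ))
      =O[𝓝 0] fun w ↦ w ^ (2 * n) := by
  have hexp := Complex.exp_sub_sum_range_isBigO_pow (2 * n)
  have hexp_neg : (fun w : ℂ ↦ Complex.exp (-w) -
      ∑ i ∈ Finset.range (2 * n), (-w) ^ i / (i.factorial : ℂ)) =O[𝓝 0] fun w ↦ w ^ (2 * n) := by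
    have hneg : Tendsto (fun w : ℂ ↦ -w) (𝓝 0) (𝓝 0) := by
      simpa only [neg_zero] using (continuous_neg (G := ℂ)).tendsto 0
    simpa only [Function.comp_def, (even_two_mul n).neg_pow] using hexp.comp_tendsto hneg
  refine ((hexp.add hexp_neg).const_mul_left (1 / 2)).congr_left fun w ↦ ?_
  rw [Complex.cosh]
  simp only [div_eq_mul_inv _ (Nat.cast _)]
  linear_combination
    -(1 / 2) * sum_range_two_mul_pow_add_neg_pow w (fun i ↦ (i.factorial : ℂ)⁻¹) n

variable (α β : ℂ)

lemma cosh_ofReal_mul_sub_sum_range_isBigO_pow (n : ℕ) :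
    (fun h : ℝ ↦ Complex.cosh (h * α) -
      ∑ i ∈ Finset.range n, (h * α) ^ (2 * i) / ((2 * i).factorial : ℂ))
      =O[𝓝 0] fun h : ℝ ↦ h ^ (2 * n) := by
  have htend : Tendsto (fun h : ℝ ↦ (h : ℂ) * α) (𝓝 0) (𝓝 0) := by
    have hcont : Continuous fun h : ℝ ↦ (h : ℂ) * α := by fun_prop
    simpa only [Complex.ofReal_zero, zero_mul] using hcont.tendsto 0
  refine ((cosh_sub_sum_range_isBigO_pow n).comp_tendsto htend).trans ?_
  refine IsBigO.of_bound (‖α‖ ^ (2 * n)) (Eventually.of_forall fun h ↦ ?_)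
  simp [mul_pow, mul_comm]

lemma cosh_sub_one_isBigO :
    (fun h : ℝ ↦ Complex.cosh (h * α) - 1) =O[𝓝 0] fun h : ℝ ↦ h ^ 2 := by
  simpa using cosh_ofReal_mul_sub_sum_range_isBigO_pow α 1

lemma cosh_sub_one_sub_sq_isBigO :
    (fun h : ℝ ↦ Complex.cosh (h * α) - 1 - α ^ 2 / 2 * h ^ 2) =O[𝓝 0] fun h : ℝ ↦ h ^ 4 := by
  refine (cosh_ofReal_mul_sub_sum_range_isBigO_pow α 2).congr_left fun h ↦ ?_
  simp only [Finset.sum_range_succ, Finset.sum_range_zero, Nat.factorial]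
  push_cast
  ring

lemma cosh_sub_one_sub_sq_sub_pow_four_isBigO :
    (fun h : ℝ ↦ Complex.cosh (h * α) - 1 - α ^ 2 / 2 * h ^ 2 - α ^ 4 / 24 * h ^ 4)
      =O[𝓝 0] fun h : ℝ ↦ h ^ 6 := by
  refine (cosh_ofReal_mul_sub_sum_range_isBigO_pow α 3).congr_left fun h ↦ ?_
  simp only [Finset.sum_range_succ, Finset.sum_range_zero, Nat.factorial]
  push_cast
  ring

lemma cosh_sub_one_mul_cosh_sub_one_isBigO :
    (fun h : ℝ ↦ (Complex.cosh (h * α) - 1) * (Complex.cosh (h * β) - 1))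
      =O[𝓝 0] fun h : ℝ ↦ h ^ 4 :=
  ((cosh_sub_one_isBigO α).mul (cosh_sub_one_isBigO β)).congr_right fun h ↦ by ring

lemma cosh_sub_one_mul_cosh_sub_one_sub_pow_four_isBigO :
    (fun h : ℝ ↦ (Complex.cosh (h * α) - 1) * (Complex.cosh (h * β) - 1)
      - α ^ 2 * β ^ 2 / 4 * h ^ 4) =O[𝓝 0] fun h : ℝ ↦ h ^ 6 := by
  have hsq : (fun h : ℝ ↦ α ^ 2 / 2 * (h : ℂ) ^ 2) =O[𝓝 0] fun h : ℝ ↦ h ^ 2 :=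
    IsBigO.const_mul_left (isBigO_of_le _ fun h ↦ by simp) _
  have hfst := ((cosh_sub_one_sub_sq_isBigO α).mul (cosh_sub_one_isBigO β)).congr_right
    (g₂ := fun h : ℝ ↦ h ^ 6) fun h ↦ by ring
  have hsnd := (hsq.mul (cosh_sub_one_sub_sq_isBigO β)).congr_right
    (g₂ := fun h : ℝ ↦ h ^ 6) fun h ↦ by ring
  exact (hfst.add hsnd).congr_left fun h ↦ by ring

end CoshExpansion

/-- The exponential `exp (α x + β z)` with complex rates. Plane waves are the case of imaginary
rates, and every translation-invariant stencil acts on it as a scalar. -/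
def expWave (α β : ℂ) (p : ℝ × ℝ) : ℂ :=
  Complex.exp (p.1 * α + p.2 * β)

lemma planeWave_eq_expWave (k θ : ℝ) :
    planeWave k θ =
      expWave (-Complex.I * k * Real.cos θ) (-Complex.I * k * Real.sin θ) := by
  funext p
  rw [planeWave, expWave]
  congr 1
  ring

lemma expWave_comp_swap (α β : ℂ) : expWave α β ∘ Prod.swap = expWave β α := by
  funext p
  simp only [Function.comp_apply, expWave, Prod.fst_swap, Prod.snd_swap, add_comm]

section Laplacian

/-- The even function of the step whose values at `h` and `2 h` make up `h² L̃ₓ` on an exponential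
with rate `α` in `x`; `β` is the rate in `z` times the mesh aspect ratio. -/
def secondDifferenceSymbol (b : ℝ) (α β : ℂ) (h : ℝ) : ℂ :=
  (Complex.cosh (h * α) - 1) * (1 + (1 - b) * (Complex.cosh (h * β) - 1))

lemma secondDifferenceSymbol_isBigO (b : ℝ) (α β : ℂ) :
    (fun h : ℝ ↦ secondDifferenceSymbol b α β h -
      (h ^ 2 • (α ^ 2 / 2) + h ^ 4 • (α ^ 4 / 24 + (1 - b) * (α ^ 2 * β ^ 2 / 4))))
      =O[𝓝 0] fun h : ℝ ↦ h ^ 6 := by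
  refine ((cosh_sub_one_sub_sq_sub_pow_four_isBigO α).add
    ((cosh_sub_one_mul_cosh_sub_one_sub_pow_four_isBigO α β).const_mul_left
      (1 - b : ℂ))).congr_left fun h ↦ ?_
  simp only [secondDifferenceSymbol, Complex.real_smul, Complex.ofReal_pow]
  ring

lemma fluxStencil_one (vm2 vm1 v0 vp1 vp2 : ℂ) (h : ℝ) :
    fluxStencil 1 1 1 1 vm2 vm1 v0 vp1 vp2 h =
      (16 * (vm1 + vp1 - 2 * v0) - (vm2 + vp2 - 2 * v0)) / 12 / h ^ 2 := by
  rw [fluxStencil]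
  ring

lemma hatVal_expWave_second_difference (b : ℝ) (α β : ℂ) (s t : ℝ) :
    hatVal b (expWave α β) (-s) 0 0 t + hatVal b (expWave α β) s 0 0 t
        - 2 * (b * expWave α β (0, 0)) =
      2 * (Complex.cosh (s * α) - 1) * (1 + (1 - b) * (Complex.cosh (t * β) - 1)) := by
  simp only [hatVal, expWave, Complex.cosh, Complex.exp_add, zero_add, zero_sub, Complex.ofReal_neg,
    Complex.ofReal_zero, zero_mul, neg_mul, Complex.exp_zero]
  ring

lemma LxTildeOne_expWave (b γ : ℝ) (α β : ℂ) (h : ℝ) :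
    LxTildeOne b γ (expWave α β) 0 0 h =
      (16 * secondDifferenceSymbol b α (γ * β) h - secondDifferenceSymbol b α (γ * β) (2 * h))
        / 6 / h ^ 2 := by
  rw [LxTildeOne, fluxStencil_one]
  simp only [zero_sub, zero_add, hatVal_expWave_second_difference, secondDifferenceSymbol]
  push_cast
  ring_nf

lemma LxTildeOne_expWave_sub_sq_isBigO (b γ : ℝ) (α β : ℂ) :
    (fun h ↦ LxTildeOne b γ (expWave α β) 0 0 h - α ^ 2) =O[𝓝[≠] 0] fun h : ℝ ↦ h ^ 4 := by
  have hrich := richardson_isBigO 2 (secondDifferenceSymbol_isBigO b α (γ * β))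
  have hinv : (fun h : ℝ ↦ 1 / 6 / (h : ℂ) ^ 2) =O[𝓝[≠] 0] fun h : ℝ ↦ (h ^ 2)⁻¹ :=
    IsBigO.of_bound (1 / 6) (Eventually.of_forall fun h ↦ by simp [div_eq_mul_inv])
  refine ((hrich.mono nhdsWithin_le_nhds).mul hinv).congr' ?_ ?_ <;>
    filter_upwards [self_mem_nhdsWithin] with h (hh : h ≠ 0)
  · have hhℂ : (h : ℂ) ≠ 0 := Complex.ofReal_ne_zero.2 hh
    rw [LxTildeOne_expWave]
    simp only [Complex.real_smul]
    push_cast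
    field_simp
    ring
  · field_simp

lemma LzTildeOne_eq_LxTildeOne_comp_swap {γ : ℝ} (hγ : γ ≠ 0) (b : ℝ) (u : ℝ × ℝ → ℂ)
    (x z h : ℝ) :
    LzTildeOne b γ u x z h = LxTildeOne b γ⁻¹ (u ∘ Prod.swap) z x (γ * h) := by
  have htilde (zo zc s : ℝ) : tildeVal b u x zo zc s = hatVal b (u ∘ Prod.swap) zo zc x s := rfl
  simp only [LzTildeOne, LxTildeOne, htilde, mul_assoc, inv_mul_cancel_left₀ hγ,
    Function.comp_apply, Prod.swap_prod_mk]

lemma LzTildeOne_expWave_sub_sq_isBigO {γ : ℝ} (hγ : γ ≠ 0) (b : ℝ) (α β : ℂ) :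
    (fun h ↦ LzTildeOne b γ (expWave α β) 0 0 h - β ^ 2) =O[𝓝[≠] 0] fun h : ℝ ↦ h ^ 4 := by
  have hscale : Tendsto (γ * ·) (𝓝[≠] 0) (𝓝[≠] (0 : ℝ)) :=
    tendsto_nhdsWithin_of_tendsto_nhds_of_eventually_within _
      ((tendsto_const_mul_nhds_zero γ).mono_left nhdsWithin_le_nhds)
      (eventually_mem_nhdsWithin.mono fun _ hh ↦ mul_ne_zero hγ hh)
  simpa only [LzTildeOne_eq_LxTildeOne_comp_swap hγ, expWave_comp_swap] using
    isBigO_pow_comp_const_mul (LxTildeOne_expWave_sub_sq_isBigO b γ⁻¹ β α) hscale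

end Laplacian

section MassLumping

/-- The even function of the step whose values at `h` and `2 h` make up `Ĩ` on an exponential with
rate `α` in `x`; `β` is the rate in `z` times the mesh aspect ratio. -/
def massSymbol (d₁ d₂ d₃ : ℝ) (α β : ℂ) (h : ℝ) : ℂ :=
  d₁ + d₂ * ((Complex.cosh (h * α) + Complex.cosh (h * β)) / 2)
    + d₃ * (Complex.cosh (h * α) * Complex.cosh (h * β))

lemma massSymbol_isBigO (d₁ d₂ d₃ : ℝ) (α β : ℂ) :
    (fun h : ℝ ↦ massSymbol d₁ d₂ d₃ α β h -
      (h ^ 0 • (d₁ + d₂ + d₃ : ℂ) + h ^ 2 • ((d₂ / 2 + d₃) * (α ^ 2 / 2 + β ^ 2 / 2))))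
      =O[𝓝 0] fun h : ℝ ↦ h ^ 4 := by
  have hsum := (cosh_sub_one_sub_sq_isBigO α).add (cosh_sub_one_sub_sq_isBigO β)
  refine ((hsum.const_mul_left (d₂ / 2 + d₃ : ℂ)).add
    ((cosh_sub_one_mul_cosh_sub_one_isBigO α β).const_mul_left (d₃ : ℂ))).congr_left fun h ↦ ?_
  simp only [massSymbol, Complex.real_smul, Complex.ofReal_pow]
  ring

lemma Itilde_expWave (γ d₁ d₂ d₃ : ℝ) (α β : ℂ) (h : ℝ) :
    Itilde γ d₁ d₂ d₃ (expWave α β) 0 0 h =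
      (4 * massSymbol d₁ d₂ d₃ α (γ * β) h - massSymbol d₁ d₂ d₃ α (γ * β) (2 * h)) / 3 := by
  simp only [Itilde, I2, I3, massSymbol, expWave, Complex.cosh, Complex.exp_add, zero_add, zero_sub,
    Complex.ofReal_zero, zero_mul, Complex.exp_zero]
  push_cast
  ring_nf

lemma Itilde_expWave_sub_one_isBigO (γ : ℝ) {d₁ d₂ d₃ : ℝ} (hd : d₁ + d₂ + d₃ = 1) (α β : ℂ) :
    (fun h ↦ Itilde γ d₁ d₂ d₃ (expWave α β) 0 0 h - 1) =O[𝓝 0] fun h : ℝ ↦ h ^ 4 := by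
  have hdℂ : (d₁ + d₂ + d₃ : ℂ) = 1 := mod_cast hd
  have hrich := richardson_isBigO 2 (massSymbol_isBigO d₁ d₂ d₃ α (γ * β))
  refine (hrich.const_mul_left (1 / 3)).congr_left fun h ↦ ?_
  rw [Itilde_expWave, hdℂ]
  simp only [Complex.real_smul]
  push_cast
  ring

lemma tendsto_Itilde_expWave (γ : ℝ) {d₁ d₂ d₃ : ℝ} (hd : d₁ + d₂ + d₃ = 1) (α β : ℂ) :
    Tendsto (fun h ↦ Itilde γ d₁ d₂ d₃ (expWave α β) 0 0 h) (𝓝 0) (𝓝 1) := by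
  have hpow : Tendsto (fun h : ℝ ↦ h ^ 4) (𝓝 0) (𝓝 0) := by
    simpa using (continuous_pow (M := ℝ) 4).tendsto 0
  exact tendsto_sub_nhds_zero_iff.1 ((Itilde_expWave_sub_one_isBigO γ hd α β).trans_tendsto hpow)

end MassLumping

theorem numericalWavenumber17_fourth_order_general (α β : ℂ) {γ : ℝ} (hγ : γ ≠ 0) (b₁ : ℝ)
    {d₁ d₂ d₃ : ℝ} (hd : d₁ + d₂ + d₃ = 1) :
    ∃ M δ : ℝ, 0 < M ∧ 0 < δ ∧ ∀ h : ℝ, 0 < h → h < δ →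
      Itilde γ d₁ d₂ d₃ (expWave α β) 0 0 h ≠ 0 ∧
      ‖-(LxTildeOne b₁ γ (expWave α β) 0 0 h + LzTildeOne b₁ γ (expWave α β) 0 0 h)
            / Itilde γ d₁ d₂ d₃ (expWave α β) 0 0 h
          - -(α ^ 2 + β ^ 2)‖ ≤ M * h ^ 4 := by
  have hL : (fun h ↦ -(LxTildeOne b₁ γ (expWave α β) 0 0 h + LzTildeOne b₁ γ (expWave α β) 0 0 h)
      - -(α ^ 2 + β ^ 2)) =O[𝓝[≠] 0] fun h : ℝ ↦ h ^ 4 :=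
    ((LxTildeOne_expWave_sub_sq_isBigO b₁ γ α β).add
      (LzTildeOne_expWave_sub_sq_isBigO hγ b₁ α β)).neg_left.congr_left fun h ↦ by ring
  have hI := (Itilde_expWave_sub_one_isBigO γ hd α β).mono (nhdsWithin_le_nhds (s := Set.Ioi 0))
  have hI_one := (tendsto_Itilde_expWave γ hd α β).mono_left (nhdsWithin_le_nhds (s := Set.Ioi 0))
  have hquot := div_sub_isBigO (hL.mono (nhdsGT_le_nhdsNE 0)) hI hI_one
  simpa only [norm_pow, Real.norm_eq_abs, (by decide : Even 4).pow_abs] using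
    exists_pos_forall_of_eventually_of_isBigO (hI_one.eventually_ne one_ne_zero) hquot

lemma neg_planeWave_rates_sq_add_sq (k θ : ℝ) :
    -((-Complex.I * k * Real.cos θ) ^ 2 + (-Complex.I * k * Real.sin θ) ^ 2) = (k : ℂ) ^ 2 := by
  have hpyth : (Real.sin θ : ℂ) ^ 2 + (Real.cos θ : ℂ) ^ 2 = 1 :=
    mod_cast Real.sin_sq_add_cos_sq θ
  linear_combination (k : ℂ) ^ 2 * hpyth - (k : ℂ) ^ 2 *
    ((Real.sin θ : ℂ) ^ 2 + (Real.cos θ : ℂ) ^ 2) * Complex.I_sq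

end

/-- Proposition 3.1, 17-point case: the numerical wavenumber of
the optimal point-weighting 17-point scheme approximates the exact wavenumber
with fourth-order accuracy. -/
theorem numericalWavenumber17_fourth_order
    (k θ γ : ℝ) (hk : 0 < k) (hγ : 0 < γ) (b₁ : ℝ)
    (d₁ d₂ d₃ : ℝ) (hd : d₁ + d₂ + d₃ = 1) :
    ∃ M δ : ℝ, 0 < M ∧ 0 < δ ∧ ∀ h : ℝ, 0 < h → h < δ →
      Itilde γ d₁ d₂ d₃ (planeWave k θ) 0 0 h ≠ 0 ∧
      ‖-(LxTildeOne b₁ γ (planeWave k θ) 0 0 h + LzTildeOne b₁ γ (planeWave k θ) 0 0 h)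
            / Itilde γ d₁ d₂ d₃ (planeWave k θ) 0 0 h
          - ((k : ℂ)) ^ 2‖ ≤ M * h ^ 4 := by
  simpa only [planeWave_eq_expWave, neg_planeWave_rates_sq_add_sq] using
    numericalWavenumber17_fourth_order_general (-Complex.I * k * Real.cos θ)
      (-Complex.I * k * Real.sin θ) hγ.ne' b₁ hd

end
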